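/- arXiv:2305.05339 — 2 statements merged into one kernel-verified Lean document; each statement's English description precedes it below -/
import Mathlib

section
/- Let (r,ρ) ∈ NC and let F = L_{r,ρ} ∪ {(t,t) | t ∈ [0,1]}. Then the Mahavier product X_F^+ is a Lelek fan, i.e., X_F^+ is homeomorphic to a non-degenerate subcontinuum Y of the Cantor fan with Cl(E(Y)) = Y. -/
/-!
A nonzero point of the Mahavier product is a positive number `t = x 0` together with a sequence of
factors chosen from `r`, `ρ`, `1`, subject to all partial products times `t` being at most `1`.
Sending it to the point at height `-t` on the segment of the Cantor fan indexed by (a Cantor-set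
code of) its sequence of factors embeds the product in the Cantor fan (`continuousOn_toFan`,
`injOn_toFan`): the code is locally constant in each coordinate away from the zero sequence, and at
the zero sequence the map is continuous because the fan shrinks to its apex. The product is compact
and star-shaped about `0`, so its image is a subcontinuum.

A point of a subset of the Cantor fan that is not the apex and is farthest from it on its segment is an
end-point of that subset (`mem_endpointSet_of_maximal`). In particular this holds for the image of every
sequence attaining the value `1`. Such sequences are dense (`exists_approx`): keep the first `N`
factors of a given sequence, then descend `k` times by `r`, ascend `l` times by `ρ` and stay
constant. Since `log r / log ρ` is irrational and `log r < 0 < log ρ`, the numbers `r ^ k * ρ ^ l`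
with `k, l ∈ ℕ` are dense in `(0, ∞)`, so an arbitrarily small rescaling of the starting value makes
the final value exactly `1`; the entries before it do not exceed `1`.
-/


open Set Topology

noncomputable section

/-- The Cantor fan: union of segments from (0,0) to (c,-1) for c in the ternary Cantor set. -/
def cantorFan : Set (ℝ × ℝ) := ⋃ c ∈ cantorSet, segment ℝ ((0 : ℝ), (0 : ℝ)) (c, (-1 : ℝ))

/-- `Y` is a subcontinuum of `X`: a nonempty compact connected subset of `X`. -/
def IsSubcontinuum (Y X : Set (ℝ × ℝ)) : Prop :=
  Y ⊆ X ∧ Y.Nonempty ∧ IsCompact Y ∧ IsConnected Y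

/-- A subset `A` of a topological space is an arc if it is homeomorphic to `[0,1]`. -/
def IsArc {X : Type*} [TopologicalSpace X] (A : Set X) : Prop :=
  Nonempty (A ≃ₜ unitInterval)

/-- `x` is an end-point of the arc `A`: the image of `0` or `1` under some homeomorphism
`[0,1] ≃ₜ A`. -/
def IsArcEndpoint {X : Type*} [TopologicalSpace X] (A : Set X) (x : X) : Prop :=
  ∃ h : unitInterval ≃ₜ A, ((h 0 : X) = x ∨ (h 1 : X) = x)

/-- The set `E(Y)` of end-points of `Y`: points `x ∈ Y` such that for every arc `A ⊆ Y`
containing `x`, `x` is an end-point of `A`. -/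
def endpointSet {X : Type*} [TopologicalSpace X] (Y : Set X) : Set X :=
  {x | x ∈ Y ∧ ∀ A : Set X, A ⊆ Y → IsArc A → x ∈ A → IsArcEndpoint A x}

/-- `Y` is a Lelek fan (as a subset of the plane): a non-degenerate subcontinuum of the
Cantor fan whose set of end-points is dense in it. -/
def IsLelekFan (Y : Set (ℝ × ℝ)) : Prop :=
  IsSubcontinuum Y cantorFan ∧ Y.Nontrivial ∧ closure (endpointSet Y) = Y

/-- The Mahavier product `X⁺_F` of a relation `F` on `[0,1]`. -/
def mahavier (F : Set (ℝ × ℝ)) : Set (ℕ → ℝ) :=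
  {x | (∀ k, x k ∈ Icc (0 : ℝ) 1) ∧ ∀ k, (x k, x (k + 1)) ∈ F}

/-- `L_r = {(x, y) ∈ [0,1] × [0,1] | y = r x}`. -/
def lineL (r : ℝ) : Set (ℝ × ℝ) :=
  {p | p.1 ∈ Icc (0 : ℝ) 1 ∧ p.2 ∈ Icc (0 : ℝ) 1 ∧ p.2 = r * p.1}

/-- The diagonal `{(t, t) | t ∈ [0,1]}`. -/
def unitDiag : Set (ℝ × ℝ) := {p | p.1 ∈ Icc (0 : ℝ) 1 ∧ p.2 = p.1}

/-- `(r, ρ) ∈ NC` : `r` and `ρ` never connect. -/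
def NC (r ρ : ℝ) : Prop :=
  0 < r ∧ r < 1 ∧ 1 < ρ ∧ ∀ k l : ℤ, r ^ k = ρ ^ l ↔ k = 0 ∧ l = 0

/-- `B_𝐚 = {(t, 𝐚(1)t, 𝐚(2)𝐚(1)t, …) | t ∈ [0,1]}` for a sequence `𝐚`. -/
def Bset (a : ℕ → ℝ) : Set (ℕ → ℝ) :=
  {x | ∃ t ∈ Icc (0 : ℝ) 1, ∀ n, x n = (∏ i ∈ Finset.range n, a i) * t}

/-! ### Positive combinations of two incommensurable reals of opposite sign -/

/-- The multiples `k • α` with `k` natural return infinitely often to any open subset of the circle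
`ℝ / β`; taking `k` large makes the coefficient of `β` natural as well. -/
theorem exists_nat_combo_mem {α β : ℝ} (hα : α < 0) (hβ : 0 < β) (hirr : Irrational (α / β))
    (y : ℝ) {η : ℝ} (hη : 0 < η) :
    ∃ k l : ℕ, k * α + l * β ∈ Ioo y (y + η) := by
  have : Fact (0 < β) := ⟨hβ⟩
  have hd : DenseRange (fun n : ℤ => n • (α : AddCircle β)) :=
    AddCircle.denseRange_zsmul_coe_iff.2 hirr
  have hc : MapClusterPt ((y + η / 2 : ℝ) : AddCircle β) Filter.atTop
      (fun n : ℕ => n • (α : AddCircle β)) := by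
    rw [mapClusterPt_atTop_nsmul_iff_mem_topologicalClosure_zmultiples]
    have := hd (((y + η / 2 : ℝ) : AddCircle β))
    rwa [← AddSubgroup.coe_zmultiples] at this
  have hU : ((↑) : ℝ → AddCircle β) '' Ioo y (y + η) ∈ 𝓝 ((y + η / 2 : ℝ) : AddCircle β) :=
    (QuotientAddGroup.isOpenMap_coe _ isOpen_Ioo).mem_nhds
      ⟨_, ⟨by linarith, by linarith⟩, rfl⟩
  have hf := hc.frequently hU
  obtain ⟨K, hK⟩ := exists_nat_gt (-y / -α)
  obtain ⟨k, ⟨z, hz, hzk⟩, hkK⟩ := (hf.and_eventually (Filter.eventually_ge_atTop K)).exists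
  have : ((z - k * α : ℝ) : AddCircle β) = 0 := by
    rw [AddCircle.coe_sub, hzk, ← nsmul_eq_mul, AddCircle.coe_nsmul, sub_self]
  obtain ⟨m, hm⟩ := (AddCircle.coe_eq_zero_iff β).1 this
  rw [zsmul_eq_mul] at hm
  -- `k` is so large that `k * α < y`, which forces the integer `m` to be nonnegative
  have hm0 : (0 : ℝ) < m * β := by
    rw [div_lt_iff₀ (by linarith)] at hK
    have : (K : ℝ) ≤ k := by exact_mod_cast hkK
    nlinarith [hz.1]
  have hm1 : 0 < m := by
    have := pos_of_mul_pos_left hm0 hβ.le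
    exact_mod_cast this
  lift m to ℕ using hm1.le
  refine ⟨k, m, ?_⟩
  have : (k : ℝ) * α + m * β = z := by push_cast at hm; linarith
  rwa [this]

namespace NC

variable {r ρ : ℝ}

theorem irrational_log (h : NC r ρ) : Irrational (Real.log r / Real.log ρ) := by
  obtain ⟨h0, h1, h2, h3⟩ := h
  rintro ⟨q, hq⟩
  have hlρ : 0 < Real.log ρ := Real.log_pos h2
  have hd : (q.den : ℝ) ≠ 0 := by exact_mod_cast q.den_nz
  rw [Rat.cast_def, div_eq_div_iff hd hlρ.ne'] at hq
  have : r ^ (q.den : ℤ) = ρ ^ q.num := by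
    apply Real.log_injOn_pos (zpow_pos h0 _) (zpow_pos (zero_lt_one.trans h2) _)
    rw [Real.log_zpow, Real.log_zpow]
    push_cast
    linarith
  have := ((h3 _ _).1 this).1
  exact q.den_nz (by exact_mod_cast this)

theorem exists_pow_mul_pow_mem (h : NC r ρ) {c d : ℝ} (hc : 0 < c) (hcd : c < d) :
    ∃ k l : ℕ, r ^ k * ρ ^ l ∈ Ioo c d := by
  have hρ0 : 0 < ρ := by linarith [h.2.2.1]
  obtain ⟨k, l, hkl⟩ := exists_nat_combo_mem (Real.log_neg h.1 h.2.1) (Real.log_pos h.2.2.1)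
    h.irrational_log (Real.log c) (η := Real.log d - Real.log c)
    (sub_pos.2 (Real.log_lt_log hc hcd))
  refine ⟨k, l, ?_⟩
  have hp : 0 < r ^ k * ρ ^ l := mul_pos (pow_pos h.1 _) (pow_pos hρ0 _)
  have hl : Real.log (r ^ k * ρ ^ l) = k * Real.log r + l * Real.log ρ := by
    rw [Real.log_mul (pow_pos h.1 _).ne' (pow_pos hρ0 _).ne', Real.log_pow, Real.log_pow]
  rw [add_sub_cancel, ← hl] at hkl
  exact ⟨(Real.log_lt_log_iff hc hp).1 hkl.1, (Real.log_lt_log_iff hp (hc.trans hcd)).1 hkl.2⟩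

end NC

/-! ### End-points of subsets of the Cantor fan -/

theorem isTotallyDisconnected_cantorSet : IsTotallyDisconnected cantorSet := by
  rw [← totallyDisconnectedSpace_subtype_iff]
  exact cantorSetHomeomorphNatToBool.symm.totallyDisconnectedSpace

theorem mem_cantorFan_iff {p : ℝ × ℝ} :
    p ∈ cantorFan ↔ ∃ c ∈ cantorSet, ∃ t ∈ Icc (0 : ℝ) 1, p = (t * c, -t) := by
  simp only [cantorFan, mem_iUnion, exists_prop, segment_eq_image']
  refine exists_congr fun c => and_congr_right fun _ => ?_
  simp only [mem_image]
  refine exists_congr fun t => and_congr_right fun _ => ?_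
  simp [eq_comm]

/-- A point that is topmost on its ray within a subset of the Cantor fan is an end-point:
near an interior point of an arc avoiding the apex, the slope coordinate takes values in the
totally disconnected Cantor set, so the arc moves along a single ray, strictly monotonically,
and passes beyond the point on one of the two sides. -/
theorem mem_endpointSet_of_maximal {Y : Set (ℝ × ℝ)} (hY : Y ⊆ cantorFan) {p : ℝ × ℝ}
    (hp : p ∈ Y) (hp0 : p.2 ≠ 0) (hmax : ∀ t : ℝ, 1 < t → t • p ∉ Y) : p ∈ endpointSet Y := by
  refine ⟨hp, fun A hA ⟨e⟩ hpA => ?_⟩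
  set s := e ⟨p, hpA⟩ with hs
  have hes : e.symm s = ⟨p, hpA⟩ := by simp [hs]
  by_cases hs0 : s = 0
  · exact ⟨e.symm, Or.inl (by rw [← hs0, hes])⟩
  by_cases hs1 : s = 1
  · exact ⟨e.symm, Or.inr (by rw [← hs1, hes])⟩
  exfalso
  have h0s : (0 : ℝ) < s := unitInterval.pos_iff_ne_zero.2 hs0
  have hs1' : (s : ℝ) < 1 := unitInterval.lt_one_iff_ne_one.2 hs1
  set f : ℝ → ℝ × ℝ := fun u => (e.symm (projIcc 0 1 zero_le_one u) : ℝ × ℝ) with hf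
  have hfc : Continuous f := by fun_prop
  have hfY : ∀ u, f u ∈ Y := fun u => hA (e.symm _).2
  have hfs : f s = p := by simp [hf, hes]
  have hfi : InjOn f (Icc 0 1) := by
    intro u hu v hv huv
    have := e.symm.injective (Subtype.ext huv)
    rw [projIcc_of_mem _ hu, projIcc_of_mem _ hv] at this
    exact congrArg Subtype.val this
  have hnhds : ∀ᶠ u in 𝓝 (s : ℝ), (f u).2 ≠ 0 ∧ u ∈ Icc (0 : ℝ) 1 := by
    refine Filter.Eventually.and ?_ (Icc_mem_nhds h0s hs1')
    exact (continuous_snd.comp hfc).continuousAt.eventually_ne (by simpa [hfs] using hp0)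
  obtain ⟨ε, hε, hball⟩ := Metric.eventually_nhds_iff_ball.1 hnhds
  set a := (s : ℝ) - ε / 2
  set b := (s : ℝ) + ε / 2
  have hsub : ∀ u ∈ Icc a b, (f u).2 ≠ 0 ∧ u ∈ Icc (0 : ℝ) 1 := by
    intro u hu
    apply hball
    rw [Metric.mem_ball, Real.dist_eq, abs_lt]
    constructor <;> simp only [a, b, mem_Icc] at hu <;> linarith [hu.1, hu.2]
  have has : a < s := by simp only [a]; linarith
  have hsb : (s : ℝ) < b := by simp only [b]; linarith
  have hsI : (s : ℝ) ∈ Icc a b := ⟨has.le, hsb.le⟩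
  set g : ℝ → ℝ := fun u => (f u).1 / -(f u).2 with hg
  have hgc : ContinuousOn g (Icc a b) :=
    (continuous_fst.comp hfc).continuousOn.div (continuous_snd.comp hfc).neg.continuousOn
      fun u hu => neg_ne_zero.2 (hsub u hu).1
  have hgK : g '' Icc a b ⊆ cantorSet := by
    rintro _ ⟨u, hu, rfl⟩
    obtain ⟨c, hc, t, ht, hfu⟩ := mem_cantorFan_iff.1 (hY (hfY u))
    have h2 := (hsub u hu).1
    rw [hfu] at h2
    have : g u = c := by
      simp only [hg, hfu]
      have : t ≠ 0 := by simpa using h2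
      field_simp
    rwa [this]
  have hgs : (g '' Icc a b).Subsingleton :=
    isTotallyDisconnected_cantorSet _ hgK (isPreconnected_Icc.image g hgc)
  have hfst : ∀ u ∈ Icc a b, (f u).1 = g s * -(f u).2 := by
    intro u hu
    rw [hgs (mem_image_of_mem g hsI) (mem_image_of_mem g hu)]
    simp only [hg]
    have := (hsub u hu).1
    field_simp
  set H : ℝ → ℝ := fun u => -(f u).2 with hH
  have hHi : InjOn H (Icc a b) := by
    intro u hu v hv huv
    apply hfi (hsub u hu).2 (hsub v hv).2
    have h2 : (f u).2 = (f v).2 := neg_injective huv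
    exact Prod.ext (by rw [hfst u hu, hfst v hv, h2]) h2
  have hHpos : 0 < H s := by
    obtain ⟨c, hc, t, ht, hfu⟩ := mem_cantorFan_iff.1 (hY (hfY s))
    have h2 := (hsub s hsI).1
    simp only [hH]
    rw [hfu] at h2 ⊢
    simp only [neg_neg]
    exact lt_of_le_of_ne ht.1 (by simpa [eq_comm] using h2)
  have key : ∃ u ∈ Icc a b, H s < H u := by
    rcases ContinuousOn.strictMonoOn_of_injOn_Icc' (has.trans hsb).le
      ((continuous_snd.comp hfc).neg.continuousOn) hHi with hm | hm
    · exact ⟨b, right_mem_Icc.2 (has.trans hsb).le, hm hsI (right_mem_Icc.2 (has.trans hsb).le) hsb⟩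
    · exact ⟨a, left_mem_Icc.2 (has.trans hsb).le, hm (left_mem_Icc.2 (has.trans hsb).le) hsI has⟩
  obtain ⟨u, hu, hlt⟩ := key
  apply hmax (H u / H s) ((one_lt_div hHpos).2 hlt)
  have : (H u / H s) • p = f u := by
    rw [← hfs]
    have h3 : (f u).2 = - H u := by simp [hH]
    have h4 : (f s).2 = - H s := by simp [hH]
    apply Prod.ext
    · simp only [Prod.smul_fst, smul_eq_mul]
      rw [hfst u hu, hfst s hsI, h3, h4]
      field_simp
    · simp only [Prod.smul_snd, smul_eq_mul]
      rw [h3, h4]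
      field_simp
  rw [this]
  exact hfY u

/-! ### The Mahavier product and its embedding in the Cantor fan -/

/-- The Mahavier product of `L_{r,ρ}` together with the diagonal. -/
def mahavierX (r ρ : ℝ) : Set (ℕ → ℝ) := mahavier (lineL r ∪ lineL ρ ∪ unitDiag)

/-- The pattern of descents (even indices) and ascents (odd indices) of a sequence. On a nonzero
point of `mahavierX r ρ` it records which of `r`, `ρ`, `1` is used at each step. -/
def updown (x : ℕ → ℝ) (m : ℕ) : Bool :=
  if Even m then decide (x (m / 2 + 1) < x (m / 2)) else decide (x (m / 2) < x (m / 2 + 1))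

/-- The point of the Cantor set coding the pattern `updown x`. -/
def code (x : ℕ → ℝ) : ℝ := cantorSetHomeomorphNatToBool.symm (updown x)

/-- The map to the Cantor fan: `x` goes to the point at height `-x 0` on the segment indexed by
`code x`. -/
def toFan (x : ℕ → ℝ) : ℝ × ℝ := (x 0 * code x, -x 0)

theorem code_mem (x : ℕ → ℝ) : code x ∈ cantorSet :=
  (cantorSetHomeomorphNatToBool.symm (updown x)).2

theorem updown_eq_of_code_eq {x y : ℕ → ℝ} (h : code x = code y) : updown x = updown y :=
  cantorSetHomeomorphNatToBool.symm.injective (Subtype.ext h)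

theorem lt_iff_of_updown_eq {x y : ℕ → ℝ} (h : updown x = updown y) (n : ℕ) :
    (x (n + 1) < x n ↔ y (n + 1) < y n) ∧ (x n < x (n + 1) ↔ y n < y (n + 1)) := by
  constructor
  · have := congrFun h (2 * n)
    simpa [updown] using this
  · have := congrFun h (2 * n + 1)
    have h2 : (2 * n + 1) / 2 = n := by omega
    simpa [updown, h2] using this

theorem updown_smul {t : ℝ} (ht : 0 < t) (x : ℕ → ℝ) : updown (t • x) = updown x := by
  funext m
  simp [updown, mul_lt_mul_iff_right₀ ht]

theorem toFan_smul {t : ℝ} (ht : 0 < t) (x : ℕ → ℝ) : toFan (t • x) = t • toFan x := by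
  simp [toFan, code, updown_smul ht, mul_assoc]

section

variable {r ρ : ℝ}

theorem mem_mahavierX_iff {x : ℕ → ℝ} : x ∈ mahavierX r ρ ↔
    (∀ k, x k ∈ Icc (0 : ℝ) 1) ∧
      ∀ k, x (k + 1) = r * x k ∨ x (k + 1) = ρ * x k ∨ x (k + 1) = x k := by
  refine and_congr_right fun hx => forall_congr' fun k => ?_
  have h1 := hx k
  have h2 := hx (k + 1)
  simp only [lineL, unitDiag, mem_union, mem_ofPred_eq, h1, h2, true_and, or_assoc]

theorem zero_mem_mahavierX : (0 : ℕ → ℝ) ∈ mahavierX r ρ :=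
  mem_mahavierX_iff.2 ⟨fun _ => by simp, fun _ => by simp⟩

theorem const_mem_mahavierX {t : ℝ} (ht : t ∈ Icc (0 : ℝ) 1) :
    (fun _ => t) ∈ mahavierX r ρ :=
  mem_mahavierX_iff.2 ⟨fun _ => ht, fun _ => by simp⟩

theorem smul_mem_mahavierX {x : ℕ → ℝ} (hx : x ∈ mahavierX r ρ) {t : ℝ} (ht : 0 ≤ t)
    (ht1 : ∀ n, t * x n ≤ 1) : t • x ∈ mahavierX r ρ := by
  rw [mem_mahavierX_iff] at hx ⊢
  refine ⟨fun k => ⟨mul_nonneg ht (hx.1 k).1, ht1 k⟩, fun k => ?_⟩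
  simp only [Pi.smul_apply, smul_eq_mul]
  rcases hx.2 k with h | h | h <;> rw [h]
  · left; ring
  · right; left; ring
  · right; right; rfl

theorem isClosed_mahavierX : IsClosed (mahavierX r ρ) := by
  have : mahavierX r ρ = {x | ∀ k, x k ∈ Icc (0 : ℝ) 1} ∩
      {x | ∀ k, x (k + 1) = r * x k ∨ x (k + 1) = ρ * x k ∨ x (k + 1) = x k} := by
    ext x; exact mem_mahavierX_iff
  rw [this]
  refine IsClosed.inter ?_ ?_
  · simp only [ofPred_forall]
    exact isClosed_iInter fun k => isClosed_Icc.preimage (continuous_apply k)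
  · simp only [ofPred_forall]
    refine isClosed_iInter fun k => ?_
    refine (isClosed_eq ?_ ?_).union ((isClosed_eq ?_ ?_).union (isClosed_eq ?_ ?_)) <;> fun_prop

theorem isCompact_mahavierX : IsCompact (mahavierX r ρ) := by
  refine (isCompact_univ_pi fun _ : ℕ => isCompact_Icc (a := (0 : ℝ)) (b := 1)).of_isClosed_subset
    isClosed_mahavierX fun x hx => ?_
  rw [mem_univ_pi]
  exact hx.1

theorem isConnected_mahavierX : IsConnected (mahavierX r ρ) := by
  have : StarConvex ℝ (0 : ℕ → ℝ) (mahavierX r ρ) := by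
    rw [starConvex_zero_iff]
    intro x hx t ht0 ht1
    exact smul_mem_mahavierX hx ht0 fun n => mul_le_one₀ ht1 (hx.1 n).1 (hx.1 n).2
  exact (this.isPathConnected zero_mem_mahavierX).isConnected

theorem pos_of_mem (h : NC r ρ) {x : ℕ → ℝ} (hx : x ∈ mahavierX r ρ) (h0 : 0 < x 0) (n : ℕ) :
    0 < x n := by
  have hρ0 : 0 < ρ := by linarith [h.2.2.1]
  induction n with
  | zero => exact h0
  | succ n ih =>
    rcases (mem_mahavierX_iff.1 hx).2 n with h' | h' | h' <;> rw [h']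
    · exact mul_pos h.1 ih
    · exact mul_pos hρ0 ih
    · exact ih

theorem eq_zero_of_mem {x : ℕ → ℝ} (hx : x ∈ mahavierX r ρ) (h0 : x 0 = 0) : x = 0 := by
  funext n
  induction n with
  | zero => exact h0
  | succ n ih =>
    rcases (mem_mahavierX_iff.1 hx).2 n with h' | h' | h' <;> simp [h', ih]

/-- Two points with the same pattern are proportional. -/
theorem mul_eq_mul_of_updown_eq (h : NC r ρ) {x y : ℕ → ℝ} (hx : x ∈ mahavierX r ρ)
    (hy : y ∈ mahavierX r ρ) (hx0 : 0 < x 0) (hy0 : 0 < y 0) (hud : updown x = updown y)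
    (n : ℕ) : y n * x 0 = x n * y 0 := by
  obtain ⟨-, hr1, hρ1, -⟩ := id h
  induction n with
  | zero => ring
  | succ n ih =>
    have hxn := pos_of_mem h hx hx0 n
    have hyn := pos_of_mem h hy hy0 n
    have hl := lt_iff_of_updown_eq hud n
    have e1 : ∀ z : ℝ, 0 < z → r * z < z := fun z hz => by nlinarith
    have e2 : ∀ z : ℝ, 0 < z → z < ρ * z := fun z hz => by nlinarith
    have a1 := e1 _ hxn
    have a2 := e2 _ hxn
    have b1 := e1 _ hyn
    have b2 := e2 _ hyn
    rcases (mem_mahavierX_iff.1 hx).2 n with h' | h' | h' <;>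
    rcases (mem_mahavierX_iff.1 hy).2 n with h'' | h'' | h'' <;>
    rw [h', h''] at hl ⊢ <;>
    first
    | linear_combination r * ih
    | linear_combination ρ * ih
    | exact ih
    | grind

theorem toFan_mem_cantorFan {x : ℕ → ℝ} (hx : x ∈ mahavierX r ρ) : toFan x ∈ cantorFan :=
  mem_cantorFan_iff.2 ⟨code x, code_mem x, x 0, hx.1 0, rfl⟩

theorem injOn_toFan (h : NC r ρ) : InjOn toFan (mahavierX r ρ) := by
  intro x hx y hy hxy
  have h0 : x 0 = y 0 := neg_injective (congrArg Prod.snd hxy)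
  rcases (hx.1 0).1.eq_or_lt with hz | hz
  · rw [eq_zero_of_mem hx hz.symm, eq_zero_of_mem hy (h0.symm.trans hz.symm)]
  · have h1 : x 0 * code x = y 0 * code y := congrArg Prod.fst hxy
    rw [← h0] at h1
    have hc := updown_eq_of_code_eq (mul_left_cancel₀ hz.ne' h1)
    funext n
    have := mul_eq_mul_of_updown_eq h hx hy hz (h0 ▸ hz) hc n
    rw [← h0] at this
    exact (mul_right_cancel₀ hz.ne' this).symm

/-- Away from the zero sequence the pattern is locally constant in each coordinate, because the
possible ratios `r < 1 < ρ` of consecutive entries are isolated from each other. -/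
theorem continuousWithinAt_updown (h : NC r ρ) {x : ℕ → ℝ} (hx : x ∈ mahavierX r ρ)
    (h0 : 0 < x 0) : ContinuousWithinAt updown (mahavierX r ρ) x := by
  have hρ0 : 0 < ρ := by linarith [h.2.2.1]
  obtain ⟨hr0, hr1, hρ1, -⟩ := id h
  rw [continuousWithinAt_pi]
  intro m
  set n := m / 2 with hn
  have hxn := pos_of_mem h hx h0 n
  have hcn : ContinuousWithinAt (fun y : ℕ → ℝ => y n) (mahavierX r ρ) x :=
    (continuous_apply n).continuousWithinAt
  have hcn1 : ContinuousWithinAt (fun y : ℕ → ℝ => y (n + 1)) (mahavierX r ρ) x :=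
    (continuous_apply (n + 1)).continuousWithinAt
  have hpos : ∀ᶠ y in 𝓝[mahavierX r ρ] x, 0 < y n := hcn.eventually_const_lt hxn
  have hmem : ∀ᶠ y in 𝓝[mahavierX r ρ] x, y ∈ mahavierX r ρ := self_mem_nhdsWithin
  -- the ratio `y (n+1) / y n` stays on the same side of `(1+r)/2` and of `(1+ρ)/2`
  have hkey : ∀ᶠ y in 𝓝[mahavierX r ρ] x, (y (n + 1) < y n ↔ x (n + 1) < x n) ∧
      (y n < y (n + 1) ↔ x n < x (n + 1)) := by
    have e1 : ∀ z : ℝ, 0 < z → r * z < z := fun z hz => by nlinarith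
    have e2 : ∀ z : ℝ, 0 < z → z < ρ * z := fun z hz => by nlinarith
    have e3 := e1 _ hxn
    have e4 := e2 _ hxn
    have hlow : ∀ᶠ y in 𝓝[mahavierX r ρ] x, y n < y (n + 1) + 1 / 2 * (y n - r * y n) ↔
        x n < x (n + 1) + 1 / 2 * (x n - r * x n) := by
      rcases lt_or_ge (x n) (x (n + 1) + 1 / 2 * (x n - r * x n)) with hlt | hge
      · filter_upwards [Filter.Tendsto.eventually_lt hcn
          (hcn1.add (continuousWithinAt_const.mul (hcn.sub (continuousWithinAt_const.mul hcn))))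
          hlt] with y hy
        exact iff_of_true hy hlt
      · have hlt : x (n + 1) + 1 / 2 * (x n - r * x n) < x n := by
          rcases (mem_mahavierX_iff.1 hx).2 n with h' | h' | h' <;> linarith
        filter_upwards [Filter.Tendsto.eventually_lt
          (hcn1.add (continuousWithinAt_const.mul (hcn.sub (continuousWithinAt_const.mul hcn))))
          hcn hlt] with y hy
        exact iff_of_false hy.not_gt hlt.not_gt
    have hhigh : ∀ᶠ y in 𝓝[mahavierX r ρ] x, y (n + 1) < y n + 1 / 2 * (ρ * y n - y n) ↔
        x (n + 1) < x n + 1 / 2 * (ρ * x n - x n) := by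
      rcases lt_or_ge (x (n + 1)) (x n + 1 / 2 * (ρ * x n - x n)) with hlt | hge
      · filter_upwards [Filter.Tendsto.eventually_lt hcn1
          (hcn.add (continuousWithinAt_const.mul ((continuousWithinAt_const.mul hcn).sub hcn)))
          hlt] with y hy
        exact iff_of_true hy hlt
      · have hlt : x n + 1 / 2 * (ρ * x n - x n) < x (n + 1) := by
          rcases (mem_mahavierX_iff.1 hx).2 n with h' | h' | h' <;> linarith
        filter_upwards [Filter.Tendsto.eventually_lt
          (hcn.add (continuousWithinAt_const.mul ((continuousWithinAt_const.mul hcn).sub hcn)))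
          hcn1 hlt] with y hy
        exact iff_of_false hy.not_gt hlt.not_gt
    filter_upwards [hlow, hhigh, hpos, hmem] with y hy1 hy2 hy3 hy4
    have e5 := e1 _ hy3
    have e6 := e2 _ hy3
    have key : ∀ z : ℕ → ℝ, z ∈ mahavierX r ρ → r * z n < z n → z n < ρ * z n →
        (z (n + 1) < z n ↔ ¬ (z n < z (n + 1) + 1 / 2 * (z n - r * z n))) ∧
        (z n < z (n + 1) ↔ ¬ (z (n + 1) < z n + 1 / 2 * (ρ * z n - z n))) := by
      intro z hz f1 f2
      rcases (mem_mahavierX_iff.1 hz).2 n with h' | h' | h' <;> rw [h'] <;>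
        constructor <;> constructor <;> intro hh <;> first | (intro hk; linarith) |
          (by_contra hk; apply hh; linarith)
    rw [(key y hy4 e5 e6).1, (key y hy4 e5 e6).2, (key x hx e3 e4).1, (key x hx e3 e4).2, hy1, hy2]
    exact ⟨Iff.rfl, Iff.rfl⟩
  have : (fun y : ℕ → ℝ => updown y m) =ᶠ[𝓝[mahavierX r ρ] x] fun _ => updown x m := by
    filter_upwards [hkey] with y hy
    simp only [updown, ← hn, hy.1, hy.2]
  exact (continuousWithinAt_const).congr_of_eventuallyEq this rfl

theorem continuousOn_toFan (h : NC r ρ) : ContinuousOn toFan (mahavierX r ρ) := by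
  intro x hx
  have hc0 : ContinuousWithinAt (fun y : ℕ → ℝ => y 0) (mahavierX r ρ) x :=
    (continuous_apply 0).continuousWithinAt
  refine ContinuousWithinAt.prodMk ?_ hc0.neg
  rcases (hx.1 0).1.eq_or_lt with hz | hz
  · -- at the zero sequence the first coordinate is squeezed between `0` and `y 0`
    rw [ContinuousWithinAt, ← hz, zero_mul]
    have hc : Filter.Tendsto (fun y : ℕ → ℝ => y 0) (𝓝[mahavierX r ρ] x) (𝓝 0) := by
      have := hc0.tendsto
      rwa [← hz] at this
    refine tendsto_of_tendsto_of_tendsto_of_le_of_le' tendsto_const_nhds hc ?_ ?_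
    · filter_upwards [self_mem_nhdsWithin] with y hy
      exact mul_nonneg (hy.1 0).1 (cantorSet_subset_unitInterval (code_mem y)).1
    · filter_upwards [self_mem_nhdsWithin] with y hy
      exact mul_le_of_le_one_right (hy.1 0).1 (cantorSet_subset_unitInterval (code_mem y)).2
  · refine hc0.mul ?_
    exact (continuous_subtype_val.comp
      cantorSetHomeomorphNatToBool.symm.continuous).continuousAt.comp_continuousWithinAt
      (continuousWithinAt_updown h hx hz)

/-! ### Density of the end-points -/

theorem toFan_mem_endpointSet (h : NC r ρ) {x : ℕ → ℝ} (hx : x ∈ mahavierX r ρ) (h0 : 0 < x 0)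
    {n : ℕ} (hn : x n = 1) : toFan x ∈ endpointSet (toFan '' mahavierX r ρ) := by
  refine mem_endpointSet_of_maximal ?_ (mem_image_of_mem _ hx) (neg_ne_zero.2 h0.ne') ?_
  · rintro _ ⟨y, hy, rfl⟩
    exact toFan_mem_cantorFan hy
  · rintro t ht ⟨y, hy, hyx⟩
    have h2 : y 0 = t * x 0 := by simpa [toFan] using congrArg Prod.snd hyx
    have h1 : y 0 * code y = t * (x 0 * code x) := congrArg Prod.fst hyx
    have hy0 : 0 < y 0 := by rw [h2]; positivity
    rw [← mul_assoc, ← h2] at h1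
    have hc := updown_eq_of_code_eq (mul_left_cancel₀ hy0.ne' h1)
    have h3 := mul_eq_mul_of_updown_eq h hx hy h0 hy0 hc.symm n
    rw [hn, h2, one_mul] at h3
    have h4 : y n = t := mul_right_cancel₀ h0.ne' h3
    linarith [(hy.1 n).2]

/-- A nonzero point can be modified, by rescaling it by a factor close to `1` and then changing
its tail, so as to attain the value `1`: after index `N` the tail descends `k` times by `r`,
ascends `l` times by `ρ`, and stays constant. Density of the products `r ^ k * ρ ^ l` allows the
final value to be exactly `1`. -/
theorem exists_approx (h : NC r ρ) {x : ℕ → ℝ} (hx : x ∈ mahavierX r ρ) (h0 : 0 < x 0)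
    (N : ℕ) {δ : ℝ} (hδ : 0 < δ) (hδ1 : δ < 1) :
    ∃ y ∈ mahavierX r ρ, 0 < y 0 ∧ (∃ n, y n = 1) ∧
      ∀ n ≤ N, (1 - δ) * x n ≤ y n ∧ y n ≤ x n := by
  have hρ0 : 0 < ρ := by linarith [h.2.2.1]
  have hv := pos_of_mem h hx h0 N
  obtain ⟨k, l, hkl1, hkl2⟩ := h.exists_pow_mul_pow_mem (c := 1 / x N) (d := 1 / ((1 - δ) * x N))
    (by positivity)
    (one_div_lt_one_div_of_lt (mul_pos (by linarith) hv) (by nlinarith))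
  have hr : 0 < r ^ k := pow_pos h.1 _
  have hρ : 0 < ρ ^ l := pow_pos hρ0 _
  rw [div_lt_iff₀ hv] at hkl1
  rw [lt_div_iff₀ (mul_pos (by linarith) hv)] at hkl2
  set D := r ^ k * ρ ^ l * x N with hD
  have hD1 : 1 < D := hkl1
  have hD2 : (1 - δ) * D < 1 := by linarith
  set θ := 1 / D with hθ
  have hD0 : 0 < D := by linarith
  have hθ0 : 0 < θ := by positivity
  have hθ1 : θ ≤ 1 := by rw [hθ, div_le_one hD0]; exact hD1.le
  have hθ2 : 1 - δ ≤ θ := by rw [hθ, le_div_iff₀ hD0]; exact hD2.le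
  have hθD : θ * x N * r ^ k * ρ ^ l = 1 := by
    have : θ * D = 1 := by rw [hθ]; field_simp
    rw [← this, hD]; ring
  set y : ℕ → ℝ := fun n => θ * x (min n N) * r ^ min (n - N) k * ρ ^ min (n - N - k) l with hy
  have hx' := mem_mahavierX_iff.1 hx
  have hle : ∀ n ≤ N, y n = θ * x n := by
    intro n hn
    have e1 : n - N = 0 := by omega
    simp [hy, e1, min_eq_left hn]
  have hy0 : ∀ n, 0 < y n := fun n =>
    mul_pos (mul_pos (mul_pos hθ0 (pos_of_mem h hx h0 _)) (pow_pos h.1 _)) (pow_pos hρ0 _)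
  refine ⟨y, mem_mahavierX_iff.2 ⟨fun n => ⟨(hy0 n).le, ?_⟩, fun n => ?_⟩, hy0 0,
    ⟨N + k + l, ?_⟩, ?_⟩
  · rcases le_total n (N + k) with hn | hn
    · have e1 : n - N - k = 0 := by omega
      simp only [hy, e1, Nat.zero_min, pow_zero, mul_one]
      exact mul_le_one₀ (mul_le_one₀ hθ1 (hx'.1 _).1 (hx'.1 _).2) (pow_pos h.1 _).le
        (pow_le_one₀ h.1.le h.2.1.le)
    · have e1 : min (n - N) k = k := by omega
      have e2 : min n N = N := by omega
      rw [← hθD]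
      simp only [hy, e1, e2]
      exact mul_le_mul_of_nonneg_left
        (pow_le_pow_right₀ h.2.2.1.le (min_le_right _ _)) (by positivity)
  · rcases lt_or_ge n N with hn | hn
    · rw [hle n hn.le, hle (n + 1) hn]
      rcases hx'.2 n with h' | h' | h' <;> rw [h']
      · left; ring
      · right; left; ring
      · right; right; rfl
    · have e1 : min n N = N := by omega
      have e2 : min (n + 1) N = N := by omega
      simp only [hy, e1, e2]
      rcases lt_or_ge (n - N) k with hk | hk
      · left
        have e3 : min (n - N) k = n - N := by omega
        have e4 : min (n + 1 - N) k = n - N + 1 := by omega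
        have e5 : n - N - k = 0 := by omega
        have e6 : n + 1 - N - k = 0 := by omega
        rw [e3, e4, e5, e6, pow_succ]; ring
      · have e3 : min (n - N) k = k := by omega
        have e4 : min (n + 1 - N) k = k := by omega
        rw [e3, e4]
        right
        rcases lt_or_ge (n - N - k) l with hl | hl
        · left
          have e5 : min (n - N - k) l = n - N - k := by omega
          have e6 : min (n + 1 - N - k) l = n - N - k + 1 := by omega
          rw [e5, e6, pow_succ]; ring
        · right
          have e5 : min (n - N - k) l = l := by omega
          have e6 : min (n + 1 - N - k) l = l := by omega
          rw [e5, e6]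
  · have e1 : min (N + k + l) N = N := by omega
    have e2 : min (N + k + l - N) k = k := by omega
    have e3 : min (N + k + l - N - k) l = l := by omega
    simp only [hy, e1, e2, e3]
    exact hθD
  · intro n hn
    rw [hle n hn]
    have := (hx'.1 n).1
    exact ⟨mul_le_mul_of_nonneg_right hθ2 this, mul_le_of_le_one_left this hθ1⟩

theorem mahavierX_subset_closure (h : NC r ρ) :
    mahavierX r ρ ⊆ closure {x | x ∈ mahavierX r ρ ∧ 0 < x 0 ∧ ∃ n, x n = 1} := by
  have hpos : ∀ x ∈ mahavierX r ρ, 0 < x 0 →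
      x ∈ closure {x | x ∈ mahavierX r ρ ∧ 0 < x 0 ∧ ∃ n, x n = 1} := by
    intro x hx h0
    have hδ : ∀ N : ℕ, (0 : ℝ) < 1 / ((N : ℝ) + 2) ∧ 1 / ((N : ℝ) + 2) < 1 := fun N => by
      have : (0 : ℝ) ≤ N := N.cast_nonneg
      exact ⟨by positivity, by rw [div_lt_one (by positivity)]; linarith⟩
    choose y hy hy0 hy1 hyN using fun N : ℕ => exists_approx h hx h0 N (hδ N).1 (hδ N).2
    refine mem_closure_of_tendsto (f := y) (b := Filter.atTop) ?_
      (Filter.Eventually.of_forall fun N => ⟨hy N, hy0 N, hy1 N⟩)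
    rw [tendsto_pi_nhds]
    intro n
    have hlim : Filter.Tendsto (fun N : ℕ => (1 - 1 / ((N : ℝ) + 2)) * x n) Filter.atTop
        (𝓝 (x n)) := by
      have h2 : Filter.Tendsto (fun N : ℕ => 1 / ((N : ℝ) + 2)) Filter.atTop (𝓝 0) := by
        simp only [one_div]
        exact (Filter.tendsto_atTop_add_const_right _ _
          tendsto_natCast_atTop_atTop).inv_tendsto_atTop
      simpa using (h2.const_sub 1).mul_const (x n)
    refine tendsto_of_tendsto_of_tendsto_of_le_of_le' hlim tendsto_const_nhds ?_ ?_
    · filter_upwards [Filter.eventually_ge_atTop n] with N hN using (hyN N n hN).1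
    · filter_upwards [Filter.eventually_ge_atTop n] with N hN using (hyN N n hN).2
  intro x hx
  rcases (hx.1 0).1.eq_or_lt with hz | hz
  · rw [eq_zero_of_mem hx hz.symm, ← closure_closure]
    refine mem_closure_of_tendsto (f := fun (N : ℕ) (_ : ℕ) => 1 / ((N : ℝ) + 1))
      (b := Filter.atTop) ?_ (Filter.Eventually.of_forall fun N => ?_)
    · rw [tendsto_pi_nhds]
      exact fun n => tendsto_one_div_add_atTop_nhds_zero_nat
    · have : (0 : ℝ) ≤ N := N.cast_nonneg
      have h1 : (0 : ℝ) < 1 / ((N : ℝ) + 1) := by positivity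
      exact hpos _ (const_mem_mahavierX
        ⟨h1.le, by rw [div_le_one (by positivity)]; linarith⟩) h1
  · exact hpos x hx hz

end

/-- For `(r, ρ) ∈ NC` and `F = L_{r,ρ} ∪ {(t,t) | t ∈ [0,1]}`, the Mahavier
product `X_F⁺` is a Lelek fan. -/
theorem mahavier_union_diag_isLelekFan (r ρ : ℝ) (h : NC r ρ) :
    ∃ Y : Set (ℝ × ℝ), IsLelekFan Y ∧
      Nonempty (↥(mahavier (lineL r ∪ lineL ρ ∪ unitDiag)) ≃ₜ ↥Y) := by
  have hcont := continuousOn_toFan h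
  have hcpt : IsCompact (toFan '' mahavierX r ρ) := isCompact_mahavierX.image_of_continuousOn hcont
  refine ⟨toFan '' mahavierX r ρ, ⟨⟨?_, ?_, hcpt, isConnected_mahavierX.image _ hcont⟩, ?_, ?_⟩, ?_⟩
  · rintro _ ⟨y, hy, rfl⟩
    exact toFan_mem_cantorFan hy
  · exact ⟨_, mem_image_of_mem _ zero_mem_mahavierX⟩
  · refine ⟨_, mem_image_of_mem _ zero_mem_mahavierX, _,
      mem_image_of_mem _ (const_mem_mahavierX (t := 1) (by simp)), fun he => ?_⟩
    simpa [toFan] using congrArg Prod.snd he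
  · refine Subset.antisymm (closure_minimal (fun p hp => hp.1) hcpt.isClosed) ?_
    rintro _ ⟨x, hx, rfl⟩
    refine ((hcont x hx).mono fun y hy => hy.1).mem_closure (mahavierX_subset_closure h hx) ?_
    rintro y ⟨hy, hy0, n, hn⟩
    exact toFan_mem_endpointSet h hy hy0 hn
  · change Nonempty (↥(mahavierX r ρ) ≃ₜ _)
    have : CompactSpace (mahavierX r ρ) := isCompact_iff_compactSpace.1 isCompact_mahavierX
    refine ⟨Continuous.homeoOfEquivCompactToT2
      (f := (injOn_toFan h).bijOn_image.equiv toFan) ?_⟩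
    exact hcont.domRestrict.subtype_mk _
end
end

section
/- Let r, ρ be reals with 0 < r < 1 < ρ. Then the union ⋃_{𝐚 ∈ {1,r,ρ}^ℕ} B_𝐚, viewed as a subspace of the Hilbert cube ∏_{k=1}^∞ [0, ρ^{k−1}] with the product topology, is a Cantor fan, i.e., it is homeomorphic to the Cantor fan C. -/
open Set Topology

noncomputable section

/-!
Both spaces are cones over a Cantor space. Let `Z = [0,1] × {0,1,2}^ℕ`, a compact space. The union
of the `B_𝐚` is the image of `Z` under `(t, s) ↦ (t, c(s₀) t, c(s₁) c(s₀) t, …)`, where `c` lists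
`1, r, ρ`, and the Cantor fan is the image of `Z` under `(t, s) ↦ t • (h s, -1)`, where `h` is a
homeomorphism from `{0,1,2}^ℕ` onto the ternary Cantor set. Both maps are continuous, and in both
the only points identified are those with `t = 0`: for the first map because `1, r, ρ` are
nonzero and distinct, so that for `t ≠ 0` the sequence `s` is recovered from ratios of consecutive
coordinates. Two continuous surjections from a compact space onto Hausdorff spaces with the same
fibres have homeomorphic targets.

The homeomorphism `h` is obtained from Mathlib's `cantorSet ≃ₜ (ℕ → Bool)` and the parsing of a
binary sequence into the words of the complete prefix code `0, 10, 11`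
(`natToBoolHomeomorphNatToFinThree`).
-/

/-- Continuous surjections with the same fibres from a compact space onto Hausdorff spaces are
quotient maps with the same kernel, so their targets are homeomorphic. -/
lemma nonempty_homeomorph_of_same_fibres {Z X Y : Type*} [TopologicalSpace Z] [CompactSpace Z]
    [TopologicalSpace X] [T2Space X] [TopologicalSpace Y] [T2Space Y] {f : Z → X} {g : Z → Y}
    (hf : Continuous f) (hfs : Function.Surjective f) (hg : Continuous g)
    (hgs : Function.Surjective g) (h : ∀ p q, f p = f q ↔ g p = g q) : Nonempty (X ≃ₜ Y) := by
  have qf : IsQuotientMap (⟨f, hf⟩ : C(Z, X)) := IsQuotientMap.of_surjective_continuous hfs hf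
  have qg : IsQuotientMap (⟨g, hg⟩ : C(Z, Y)) := IsQuotientMap.of_surjective_continuous hgs hg
  have hk : Setoid.ker f = Setoid.ker g := Setoid.ext h
  have e : Quotient (Setoid.ker f) ≃ₜ Y := by
    rw [hk]
    exact qg.homeomorph
  exact ⟨qf.homeomorph.symm.trans e⟩

/-- The first letter of a binary sequence parsed with the prefix code `0, 10, 11`. -/
def codeHead (x : ℕ → Bool) : Fin 3 := if x 0 then (if x 1 then 2 else 1) else 0

/-- What remains of a binary sequence once its first code word (among `0, 10, 11`) is removed. -/
def codeTail (x : ℕ → Bool) : ℕ → Bool := fun n => if x 0 then x (n + 2) else x (n + 1)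

/-- The sequence of letters obtained by parsing a binary sequence with the code `0, 10, 11`. -/
def decode (x : ℕ → Bool) (n : ℕ) : Fin 3 := codeHead (codeTail^[n] x)

/-- The concatenation of the code words (among `0, 10, 11`) of a sequence of letters. -/
def encode : (ℕ → Fin 3) → ℕ → Bool
  | s, 0 => decide (s 0 ≠ 0)
  | s, 1 => if s 0 = 0 then encode (fun k => s (k + 1)) 0 else decide (s 0 = 2)
  | s, n + 2 =>
    if s 0 = 0 then encode (fun k => s (k + 1)) (n + 1) else encode (fun k => s (k + 1)) n

lemma continuous_codeHead : Continuous codeHead := by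
  have h : Continuous fun p : Bool × Bool => (if p.1 then (if p.2 then 2 else 1) else 0 : Fin 3) :=
    continuous_of_discreteTopology
  exact h.comp (f := fun x : ℕ → Bool => (x 0, x 1)) (by fun_prop)

lemma continuous_codeTail : Continuous codeTail := by
  have h : Continuous fun p : Bool × Bool × Bool => if p.1 then p.2.1 else p.2.2 :=
    continuous_of_discreteTopology
  exact continuous_pi fun n =>
    h.comp (f := fun x : ℕ → Bool => (x 0, x (n + 2), x (n + 1))) (by fun_prop)

lemma continuous_decode : Continuous decode :=
  continuous_pi fun n => continuous_codeHead.comp (continuous_codeTail.iterate n)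

lemma codeHead_encode (s : ℕ → Fin 3) : codeHead (encode s) = s 0 := by
  have h : ∀ i : Fin 3, i = 0 ∨ i = 1 ∨ i = 2 := by decide
  rcases h (s 0) with h | h | h <;> simp [codeHead, encode, h]

lemma codeTail_encode (s : ℕ → Fin 3) : codeTail (encode s) = encode fun k => s (k + 1) := by
  funext n
  by_cases h : s 0 = 0
  · cases n <;> simp [codeTail, encode, h]
  · simp [codeTail, encode, h]

lemma decode_encode (s : ℕ → Fin 3) : decode (encode s) = s := by
  funext n
  induction n generalizing s with
  | zero => exact codeHead_encode s
  | succ n ih =>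
    have := ih fun k => s (k + 1)
    rwa [← codeTail_encode] at this

/-- The first letter determines the first code word, and each later digit is an earlier digit of
the remainder; so strong induction on the position recovers every digit. -/
lemma decode_injective : Function.Injective decode := by
  suffices H : ∀ n, ∀ x y : ℕ → Bool, decode x = decode y → x n = y n from
    fun x y h => funext fun n => H n x y h
  intro n
  induction n using Nat.strong_induction_on with
  | _ n ih =>
    intro x y h
    have h0 : codeHead x = codeHead y := congrFun h 0
    have ht : decode (codeTail x) = decode (codeTail y) := funext fun k => congrFun h (k + 1)
    have hx0 : x 0 = y 0 := by
      unfold codeHead at h0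
      revert h0
      cases x 0 <;> cases y 0 <;> cases x 1 <;> cases y 1 <;> decide
    have hx1 : x 0 = true → x 1 = y 1 := by
      unfold codeHead at h0
      revert h0
      cases x 0 <;> cases y 0 <;> cases x 1 <;> cases y 1 <;> decide
    match n, ih with
    | 0, _ => exact hx0
    | 1, ih =>
      cases hx : x 0
      · have := ih 0 (by omega) _ _ ht
        simpa [codeTail, ← hx0, hx] using this
      · exact hx1 hx
    | n + 2, ih =>
      cases hx : x 0
      · have := ih (n + 1) (by omega) _ _ ht
        simpa [codeTail, ← hx0, hx] using this
      · have := ih n (by omega) _ _ ht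
        simpa [codeTail, ← hx0, hx] using this

/-- Parsing with the prefix code `0, 10, 11` is a homeomorphism of Cantor spaces. -/
def natToBoolHomeomorphNatToFinThree : (ℕ → Bool) ≃ₜ (ℕ → Fin 3) :=
  Continuous.homeoOfEquivCompactToT2
    (f := Equiv.ofBijective decode ⟨decode_injective, fun s => ⟨encode s, decode_encode s⟩⟩)
    continuous_decode

/-- The partial products of `c ∘ s`, scaled by `t ≠ 0`, determine `s` when `c` is injective and
nowhere zero. -/
lemma eq_of_prod_mul_eq {c : Fin 3 → ℝ} (hc : Function.Injective c) (hc0 : ∀ i, c i ≠ 0)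
    {s s' : ℕ → Fin 3} {t : ℝ} (ht : t ≠ 0)
    (h : ∀ n, (∏ i ∈ Finset.range n, c (s i)) * t = (∏ i ∈ Finset.range n, c (s' i)) * t) :
    s = s' := by
  funext n
  have h1 := mul_right_cancel₀ ht (h n)
  have h2 := mul_right_cancel₀ ht (h (n + 1))
  rw [Finset.prod_range_succ, Finset.prod_range_succ, h1] at h2
  exact hc (mul_left_cancel₀ (Finset.prod_ne_zero_iff.mpr fun i _ => hc0 _) h2)

/-- For `0 < r < 1 < ρ`, the union `⋃_{𝐚 ∈ {1,r,ρ}^ℕ} B_𝐚` is a Cantor fan. -/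
theorem iUnion_Bset_isCantorFan (r ρ : ℝ) (hr : 0 < r) (hr1 : r < 1) (hρ : 1 < ρ) :
    Nonempty
      (↥(⋃ a ∈ {a : ℕ → ℝ | ∀ n, a n ∈ ({1, r, ρ} : Set ℝ)}, Bset a) ≃ₜ ↥cantorFan) := by
  have e : (ℕ → Fin 3) ≃ₜ cantorSet :=
    natToBoolHomeomorphNatToFinThree.symm.trans cantorSetHomeomorphNatToBool.symm
  obtain ⟨c, hc⟩ : ∃ c : Fin 3 → ℝ, c = ![1, r, ρ] := ⟨_, rfl⟩
  have hcr : range c = {1, r, ρ} := by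
    ext x
    simp only [hc, mem_range, Fin.exists_fin_succ, mem_insert_iff, mem_singleton_iff]
    simp [eq_comm]
  have hinj : Function.Injective c := by
    intro i j hij
    fin_cases i <;> fin_cases j <;> simp [hc] at hij ⊢ <;> linarith
  have hc0 : ∀ i, c i ≠ 0 := by
    intro i
    fin_cases i <;> simp [hc] <;> linarith
  have hcm : ∀ i, c i ∈ ({1, r, ρ} : Set ℝ) := fun i => hcr ▸ mem_range_self i
  let f : Icc (0 : ℝ) 1 × (ℕ → Fin 3) →
      ↥(⋃ a ∈ {a : ℕ → ℝ | ∀ n, a n ∈ ({1, r, ρ} : Set ℝ)}, Bset a) := fun p =>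
    ⟨fun n => (∏ i ∈ Finset.range n, c (p.2 i)) * p.1, by
      simp only [mem_iUnion]
      exact ⟨fun i => c (p.2 i), fun i => hcm _, p.1, p.1.2, fun n => rfl⟩⟩
  let g : Icc (0 : ℝ) 1 × (ℕ → Fin 3) → cantorFan := fun p =>
    ⟨((p.1 : ℝ) * e p.2, -(p.1 : ℝ)), by
      simp only [cantorFan, mem_iUnion]
      refine ⟨e p.2, (e p.2).2, 1 - p.1, p.1, by linarith [p.1.2.2], p.1.2.1, by ring, ?_⟩
      ext <;> simp⟩
  refine nonempty_homeomorph_of_same_fibres (f := f) (g := g) ?_ ?_ ?_ ?_ ?_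
  · refine Continuous.subtype_mk (continuous_pi fun n => ?_) _
    refine (continuous_finsetProd _ fun i _ => ?_).mul (by fun_prop)
    exact (continuous_of_discreteTopology (f := c)).comp (by fun_prop)
  · rintro ⟨x, hx⟩
    simp only [mem_iUnion] at hx
    obtain ⟨a, ha, t, ht, hxt⟩ := hx
    have : ∀ n, ∃ i, c i = a n := fun n => by
      have := ha n
      rwa [← hcr] at this
    choose s hs using this
    refine ⟨(⟨t, ht⟩, s), Subtype.ext (funext fun n => ?_)⟩
    simp [f, hs, hxt]
  · exact Continuous.subtype_mk (by fun_prop) _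
  · rintro ⟨x, hx⟩
    simp only [cantorFan, mem_iUnion] at hx
    obtain ⟨k, hk, u, v, hu, hv, huv, rfl⟩ := hx
    refine ⟨(⟨v, hv, by linarith⟩, e.symm ⟨k, hk⟩), Subtype.ext ?_⟩
    ext <;> simp [g]
  -- In both models, points agree exactly when their parameters agree and, unless the parameter
  -- vanishes, so do their sequences.
  · have hfk : ∀ p q, f p = f q ↔ p.1 = q.1 ∧ ((p.1 : ℝ) = 0 ∨ p.2 = q.2) := by
      rintro ⟨t, s⟩ ⟨t', s'⟩
      constructor
      · intro h
        have hn : ∀ n, (∏ i ∈ Finset.range n, c (s i)) * (t : ℝ)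
            = (∏ i ∈ Finset.range n, c (s' i)) * t' := fun n =>
          congrFun (congrArg Subtype.val h) n
        have htt : (t : ℝ) = t' := by simpa using hn 0
        refine ⟨Subtype.ext htt, ?_⟩
        by_cases h0 : (t : ℝ) = 0
        · exact Or.inl h0
        · exact Or.inr (eq_of_prod_mul_eq hinj hc0 h0 fun n => by rw [hn n, htt])
      · rintro ⟨htt, h0 | h0⟩
        · dsimp only at htt h0
          subst htt
          exact Subtype.ext (funext fun n => by simp [f, h0])
        · dsimp only at htt h0
          rw [htt, h0]
    have hgk : ∀ p q, g p = g q ↔ p.1 = q.1 ∧ ((p.1 : ℝ) = 0 ∨ p.2 = q.2) := by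
      rintro ⟨t, s⟩ ⟨t', s'⟩
      simp only [g, Subtype.mk.injEq, Prod.mk.injEq, neg_inj, Subtype.coe_inj]
      constructor
      · rintro ⟨h, rfl⟩
        refine ⟨rfl, ?_⟩
        rcases mul_eq_mul_left_iff.mp h with h | h
        · exact Or.inr (e.injective (Subtype.ext h))
        · exact Or.inl h
      · rintro ⟨rfl, h | h⟩ <;> simp [h]
    exact fun p q => (hfk p q).trans (hgk p q).symm
end
end
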